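/- arXiv:math/0509284 — 2 statements merged into one kernel-verified Lean document; each statement's English description precedes it below -/
import Mathlib

section
/- Let A be a commutative ring, Ω an A-module, and d : A → Ω a derivation. Let E be a finitely generated projective A-module, H an A-module equipped with a connection ℍ relative to d, and j : E → H a surjective A-linear map. Then there exists a connection ∇ on E relative to d such that (j ⊗ id_Ω) ∘ ∇ = ℍ ∘ j as maps E → H ⊗[A] Ω. -/
open TensorProduct

/-!
On a free module, applying `d` to coordinates is a connection; compressing it to a direct summand
gives a connection on every projective module `E`. For any connection `∇₀` on `E`, the Leibniz terms
of `ℍ ∘ j` and `(j ⊗ id) ∘ ∇₀` cancel, so their difference is `A`-linear. As `E` is projective, it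
lifts along the surjection `j ⊗ id` to an `A`-linear map, and adding this map to `∇₀` corrects `∇₀`.
-/

section Semiring

variable {A Ω M P : Type*} [CommSemiring A] [AddCommMonoid Ω] [Module A Ω]
  [AddCommMonoid M] [Module A M] [AddCommMonoid P] [Module A P]

/-- The additive map `D` is a connection on `M` relative to `d`: it satisfies the Leibniz rule. As a
choice of encoding, `d` is a bare function, which may be a `Derivation` or any other bundled map. -/
def IsConnection (d : A → Ω) (D : M →+ M ⊗[A] Ω) : Prop :=
  ∀ (a : A) (m : M), D (a • m) = a • D m + m ⊗ₜ[A] d a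

theorem IsConnection.add_linearMap {d : A → Ω} {D : M →+ M ⊗[A] Ω} (hD : IsConnection d D)
    (φ : M →ₗ[A] M ⊗[A] Ω) : IsConnection d (D + φ.toAddMonoidHom) := by
  intro a m
  simp only [AddMonoidHom.add_apply, LinearMap.toAddMonoidHom_coe, hD a m, map_smul, smul_add]
  abel

theorem IsConnection.compress {d : A → Ω} {D : P →+ P ⊗[A] Ω} (hD : IsConnection d D)
    {i : M →ₗ[A] P} {p : P →ₗ[A] M} (hpi : p ∘ₗ i = LinearMap.id) :
    IsConnection d (((p.rTensor Ω).toAddMonoidHom.comp D).comp i.toAddMonoidHom) := by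
  intro a m
  have hm : p (i m) = m := LinearMap.congr_fun hpi m
  simp only [AddMonoidHom.comp_apply, LinearMap.toAddMonoidHom_coe, map_smul, hD a (i m), map_add,
    LinearMap.rTensor_tmul, hm]

variable {R : Type*} [CommSemiring R] [Algebra R A] [Module R Ω]

/-- The trivial connection on the free module on `ι`, which applies `d` to each coordinate: the one
for which the standard basis vectors are horizontal. Projective modules inherit their connections
from it. -/
noncomputable def freeConnection (d : Derivation R A Ω) (ι : Type*) :
    (ι →₀ A) →+ (ι →₀ A) ⊗[A] Ω :=
  Finsupp.liftAddHom fun i =>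
    (TensorProduct.mk A (ι →₀ A) Ω (Finsupp.single i 1)).toAddMonoidHom.comp (d : A →+ Ω)

theorem freeConnection_single (d : Derivation R A Ω) {ι : Type*} (i : ι) (b : A) :
    freeConnection d ι (Finsupp.single i b) = Finsupp.single i 1 ⊗ₜ[A] d b := by
  simp [freeConnection]

theorem isConnection_freeConnection (d : Derivation R A Ω) (ι : Type*) :
    IsConnection d (freeConnection d ι) := by
  intro a f
  induction f using Finsupp.induction_linear with
  | zero => simp
  | add f g hf hg =>
    rw [smul_add, map_add, hf, hg, map_add, add_tmul, smul_add]
    abel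
  | single i b =>
    rw [Finsupp.smul_single, freeConnection_single, freeConnection_single, smul_eq_mul, d.leibniz,
      tmul_add, tmul_smul, tmul_smul, ← Finsupp.smul_single_one i b, smul_tmul', smul_tmul']

theorem exists_isConnection (d : Derivation R A Ω) (M : Type*) [AddCommMonoid M] [Module A M]
    [Module.Projective A M] : ∃ D : M →+ M ⊗[A] Ω, IsConnection d D := by
  obtain ⟨s, hs⟩ := Module.projective_def'.1 ‹Module.Projective A M›
  exact ⟨_, (isConnection_freeConnection d M).compress hs⟩

end Semiring

section Ring

variable {A Ω M N : Type*} [CommRing A] [AddCommGroup Ω] [Module A Ω]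
  [AddCommGroup M] [Module A M] [AddCommGroup N] [Module A N]

/-- The failure `D' ∘ j - (j ⊗ id) ∘ D` of a linear map `j` to intertwine the connections `D` on its
source and `D'` on its target, bundled as a linear map so that it can be lifted along `j ⊗ id`. -/
def IsConnection.defect {d : A → Ω} {D : M →+ M ⊗[A] Ω} {D' : N →+ N ⊗[A] Ω}
    (hD : IsConnection d D) (hD' : IsConnection d D') (j : M →ₗ[A] N) : M →ₗ[A] N ⊗[A] Ω where
  toFun m := D' (j m) - j.rTensor Ω (D m)
  map_add' m m' := by
    simp only [map_add]
    abel
  map_smul' a m := by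
    simp only [map_smul, hD a m, hD' a (j m), map_add, LinearMap.rTensor_tmul, RingHom.id_apply,
      smul_sub]
    abel

theorem stmt2_general {R : Type*} [CommSemiring R] [Algebra R A] [Module R Ω]
    (d : Derivation R A Ω) [Module.Projective A M] {D' : N →+ N ⊗[A] Ω} (hD' : IsConnection d D')
    {j : M →ₗ[A] N} (hj : Function.Surjective (j.rTensor Ω)) :
    ∃ D : M →+ M ⊗[A] Ω, IsConnection d D ∧ ∀ m, j.rTensor Ω (D m) = D' (j m) := by
  obtain ⟨D₀, hD₀⟩ := exists_isConnection d M
  obtain ⟨φ, hφ⟩ := Module.projective_lifting_property (j.rTensor Ω) (hD₀.defect hD' j) hj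
  refine ⟨D₀ + φ.toAddMonoidHom, hD₀.add_linearMap φ, fun m => ?_⟩
  have hφm : j.rTensor Ω (φ m) = D' (j m) - j.rTensor Ω (D₀ m) := LinearMap.congr_fun hφ m
  rw [AddMonoidHom.add_apply, LinearMap.toAddMonoidHom_coe, map_add, hφm, add_sub_cancel]

end Ring

/-- Let `A` be a commutative ring, `Ω` an `A`-module, and `d : A → Ω` a
derivation. Let `E` be a finitely generated projective `A`-module, `H` an `A`-module with
a connection `ℍ` relative to `d`, and `j : E → H` a surjective `A`-linear map. Then there
is a connection `∇` on `E` relative to `d` with `(j ⊗ id) ∘ ∇ = ℍ ∘ j`. -/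
theorem stmt2 {A : Type*} [CommRing A] {Ω : Type*} [AddCommGroup Ω] [Module A Ω]
    (d : A →+ Ω) (hd : ∀ a b : A, d (a * b) = a • d b + b • d a)
    {E H : Type*} [AddCommGroup E] [Module A E] [Module.Finite A E] [Module.Projective A E]
    [AddCommGroup H] [Module A H]
    (ℍ : H →+ H ⊗[A] Ω)
    (hℍ : ∀ (a : A) (m : H), ℍ (a • m) = a • ℍ m + m ⊗ₜ[A] d a)
    (j : E →ₗ[A] H) (hj : Function.Surjective j) :
    ∃ co : E →+ E ⊗[A] Ω,
      (∀ (a : A) (m : E), co (a • m) = a • co m + m ⊗ₜ[A] d a) ∧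
      (∀ x : E, TensorProduct.map j (LinearMap.id : Ω →ₗ[A] Ω) (co x) = ℍ (j x)) :=
  stmt2_general (Derivation.mk' d.toIntLinearMap hd) hℍ (LinearMap.rTensor_surjective Ω hj)
end

section
/- Let (A, 𝒜, D, c) be a curved dga over a field k whose degree-zero part R = 𝒜 0 is commutative and central in A, let (E^p)_{p∈ℤ} be a family of R-modules, let M = ⊕_p E^p ⊗[R] A be the induced graded right A-module, and let 𝔼 be a ℤ-connection on M. For e ∈ E^p and each q ≥ 0, let 𝔼^q(e) ∈ E^{p+1−q} ⊗[R] 𝒜 q denote the component of 𝔼(e ⊗ 1) in the summand E^{p+1−q} ⊗[R] 𝒜 q of the degree-(p+1) part of M. Then: (i) for every q ≠ 1, the map 𝔼^q is R-linear, i.e. 𝔼^q(r·e) = 𝔼^q(e)·r for all r ∈ R and e ∈ E^p; and (ii) 𝔼^1 satisfies the connection Leibniz rule 𝔼^1(r·e) = 𝔼^1(e)·r + (−1)^p e ⊗ D(r) for all r ∈ R and e ∈ E^p (note D(r) ∈ 𝒜 1). -/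
open TensorProduct

/-- A curved differential graded algebra over a field `k`, whose degree-zero part is
(identified with) a commutative ring `R` which is central in `A`: the grading is by
`R`-submodules `gr i` of the `k`-algebra `A`, forming an internal direct sum, with
`gr 0` equal to the (isomorphic) image of `R` in `A`, `gr i * gr j ⊆ gr (i+j)`, a
degree `+1` `k`-linear map `D` satisfying the graded Leibniz rule, and a curvature
element `c ∈ gr 2` with `D² = [c, ·]` and `D c = 0`. -/
structure CurvedDGAOver (k R A : Type*) [Field k] [CommRing R] [Algebra k R]
    [Ring A] [Algebra k A] [Algebra R A] [IsScalarTower k R A] where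
  gr : ℕ → Submodule R A
  isInternal : DirectSum.IsInternal gr
  gr_zero : gr 0 = LinearMap.range (Algebra.linearMap R A)
  inj : Function.Injective (algebraMap R A)
  mul_mem : ∀ {i j : ℕ} {a b : A}, a ∈ gr i → b ∈ gr j → a * b ∈ gr (i + j)
  D : A →ₗ[k] A
  D_mem : ∀ {i : ℕ} {a : A}, a ∈ gr i → D a ∈ gr (i + 1)
  leibniz : ∀ {i : ℕ} {a : A} (b : A), a ∈ gr i →
    D (a * b) = D a * b + ((-1 : ℤ) ^ i) • (a * D b)
  c : A
  c_mem : c ∈ gr 2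
  D_sq : ∀ a : A, D (D a) = c * a - a * c
  D_c : D c = 0

section

variable (k R A : Type*) [Field k] [CommRing R] [Algebra k R]
  [Ring A] [Algebra k A] [Algebra R A] [IsScalarTower k R A]
variable (𝔄 : CurvedDGAOver k R A)
variable (F : ℤ → Type*) [∀ p, AddCommGroup (F p)] [∀ p, Module R (F p)]
  [∀ p, Module k (F p)] [∀ p, IsScalarTower k R (F p)]

/-- The induced graded right `A`-module `M = ⊕ₚ F^p ⊗[R] A`. -/
abbrev IndMod := DirectSum ℤ (fun p => F p ⊗[R] A)

/-- The inclusion of the `p`-th summand. -/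
noncomputable def emb (p : ℤ) : (F p ⊗[R] A) →ₗ[R] IndMod R A F :=
  DirectSum.lof R ℤ (fun p => F p ⊗[R] A) p

/-- The right action of `a : A` on `M = ⊕ₚ F^p ⊗[R] A`, given on each summand by
`e ⊗ ω ↦ e ⊗ (ω * a)`. -/
noncomputable def rAct (a : A) : IndMod R A F →ₗ[R] IndMod R A F :=
  DirectSum.toModule R ℤ (IndMod R A F)
    (fun p => (emb R A F p).comp
      (TensorProduct.map (LinearMap.id : F p →ₗ[R] F p) (LinearMap.mulRight R a)))

/-- The degree-`n` part `⊕_{p+q=n} F^p ⊗[R] 𝒜 q` of `M`, as a submodule. -/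
noncomputable def degSub (n : ℤ) : Submodule R (IndMod R A F) :=
  ⨆ (p : ℤ) (q : ℕ) (_ : p + (q : ℤ) = n),
    Submodule.map (emb R A F p)
      (LinearMap.range (TensorProduct.map (LinearMap.id : F p →ₗ[R] F p) (𝔄.gr q).subtype))

/-- The part `⊕_{q ≥ 1} F^{p'-q} ⊗[R] 𝒜 q` of `M`, as a submodule. -/
noncomputable def hiSub (p' : ℤ) : Submodule R (IndMod R A F) :=
  ⨆ (q : ℕ) (_ : 1 ≤ q),
    Submodule.map (emb R A F (p' - q))
      (LinearMap.range (TensorProduct.map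
        (LinearMap.id : F (p' - q) →ₗ[R] F (p' - q)) (𝔄.gr q).subtype))

/-- A `ℤ`-connection on the induced module `M = ⊕ₚ F^p ⊗[R] A`: a `k`-linear map
raising the grading by one and satisfying the Leibniz rule. -/
def IsZConnection (𝔼 : IndMod R A F →ₗ[k] IndMod R A F) : Prop :=
  (∀ (n : ℤ) (m : IndMod R A F), m ∈ degSub k R A 𝔄 F n → 𝔼 m ∈ degSub k R A 𝔄 F (n + 1)) ∧
  (∀ (n : ℤ) (m : IndMod R A F) (a : A), m ∈ degSub k R A 𝔄 F n →
    𝔼 (rAct R A F a m) = rAct R A F a (𝔼 m)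
      + (((-1 : ℤˣ) ^ n : ℤˣ) : ℤ) • rAct R A F (𝔄.D a) m)

/-- Integrability of a `ℤ`-connection: `𝔼(𝔼 m) = - m · c`. -/
def IsIntegrable (𝔼 : IndMod R A F →ₗ[k] IndMod R A F) : Prop :=
  ∀ m : IndMod R A F, 𝔼 (𝔼 m) = - rAct R A F 𝔄.c m

end

section

variable {k R A : Type*} [Field k] [CommRing R] [Algebra k R]
  [Ring A] [Algebra k A] [Algebra R A] [IsScalarTower k R A]

/-- The projection of `A` onto its degree-`q` graded piece, coming from the internal
direct sum decomposition `A = ⊕ q, 𝒜 q`. -/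
noncomputable def projGr (𝔄 : CurvedDGAOver k R A) (q : ℕ) : A →ₗ[R] ↥(𝔄.gr q) :=
  (DirectSum.component R ℕ (fun i => ↥(𝔄.gr i)) q).comp
    (LinearEquiv.ofBijective (DirectSum.coeLinearMap 𝔄.gr) 𝔄.isInternal).symm.toLinearMap

variable (𝔄 : CurvedDGAOver k R A)
variable (E : ℤ → Type*) [∀ p, AddCommGroup (E p)] [∀ p, Module R (E p)]
  [∀ p, Module k (E p)] [∀ p, IsScalarTower k R (E p)]

/-- The component in the summand `E^{p'} ⊗[R] 𝒜 q` of `𝔼(e ⊗ 1)`, for `e ∈ E^p`.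
(For a `ℤ`-connection `𝔼` this vanishes unless `p' + q = p + 1`.) -/
noncomputable def connComp (𝔼 : IndMod R A E →ₗ[k] IndMod R A E)
    (p p' : ℤ) (q : ℕ) (e : E p) : E p' ⊗[R] ↥(𝔄.gr q) :=
  (TensorProduct.map (LinearMap.id : E p' →ₗ[R] E p') (projGr 𝔄 q))
    ((DirectSum.component R ℤ (fun i => E i ⊗[R] A) p') (𝔼 (emb R A E p (e ⊗ₜ[R] (1 : A)))))

/- Since `(r • e) ⊗ 1 = (e ⊗ 1) · r`, the Leibniz rule reads
`𝔼 ((r • e) ⊗ 1) = r • 𝔼 (e ⊗ 1) + (-1)^p e ⊗ D r` for `e ∈ F^p`. As `D r ∈ 𝒜 1`, the failure of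
`R`-linearity is concentrated in the single bidegree `(p, 1)`. -/

section

variable {F : ℤ → Type*} [∀ p, AddCommGroup (F p)] [∀ p, Module R (F p)]

theorem rAct_emb_tmul (p : ℤ) (e : F p) (ω a : A) :
    rAct R A F a (emb R A F p (e ⊗ₜ[R] ω)) = emb R A F p (e ⊗ₜ[R] (ω * a)) := by
  simp [rAct, emb]

theorem rAct_algebraMap (r : R) (m : IndMod R A F) :
    rAct R A F (algebraMap R A r) m = r • m := by
  suffices h : rAct R A F (algebraMap R A r) = r • LinearMap.id from LinearMap.congr_fun h m
  refine DirectSum.linearMap_ext R fun p ↦ TensorProduct.ext' fun e ω ↦ ?_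
  calc rAct R A F (algebraMap R A r) (emb R A F p (e ⊗ₜ[R] ω))
      = emb R A F p (e ⊗ₜ[R] (ω * algebraMap R A r)) := rAct_emb_tmul p e ω _
    _ = r • emb R A F p (e ⊗ₜ[R] ω) := by
      rw [← Algebra.commutes, ← Algebra.smul_def, tmul_smul, map_smul]

namespace CurvedDGAOver

theorem algebraMap_mem_gr_zero (r : R) : algebraMap R A r ∈ 𝔄.gr 0 :=
  𝔄.gr_zero ▸ LinearMap.mem_range_self (Algebra.linearMap R A) r

theorem one_mem_gr_zero : (1 : A) ∈ 𝔄.gr 0 :=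
  map_one (algebraMap R A) ▸ 𝔄.algebraMap_mem_gr_zero 1

theorem D_algebraMap_mem_gr_one (r : R) : 𝔄.D (algebraMap R A r) ∈ 𝔄.gr 1 :=
  𝔄.D_mem (𝔄.algebraMap_mem_gr_zero r)

end CurvedDGAOver

theorem projGr_of_mem {q : ℕ} {a : A} (ha : a ∈ 𝔄.gr q) : projGr 𝔄 q a = ⟨a, ha⟩ :=
  𝔄.isInternal.ofBijective_coeLinearMap_of_mem ha

theorem projGr_of_mem_ne {q q' : ℕ} (hq : q ≠ q') {a : A} (ha : a ∈ 𝔄.gr q) :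
    projGr 𝔄 q' a = 0 :=
  𝔄.isInternal.ofBijective_coeLinearMap_of_mem_ne hq ha

theorem emb_tmul_mem_degSub (p : ℤ) (e : F p) {q : ℕ} {ω : A} (hω : ω ∈ 𝔄.gr q) :
    emb R A F p (e ⊗ₜ[R] ω) ∈ degSub k R A 𝔄 F (p + q) :=
  Submodule.mem_iSup_of_mem p <| Submodule.mem_iSup_of_mem q <| Submodule.mem_iSup_of_mem rfl <|
    Submodule.mem_map_of_mem ⟨e ⊗ₜ[R] ⟨ω, hω⟩, map_tmul _ _ _ _⟩

variable (F) in
/-- The projection of `M = ⊕ₚ F^p ⊗[R] A` onto its part `F^p ⊗[R] 𝒜 q` of bidegree `(p, q)`. -/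
noncomputable def bigradedComponent (p : ℤ) (q : ℕ) : IndMod R A F →ₗ[R] F p ⊗[R] ↥(𝔄.gr q) :=
  (TensorProduct.map LinearMap.id (projGr 𝔄 q)).comp
    (DirectSum.component R ℤ (fun i ↦ F i ⊗[R] A) p)

theorem bigradedComponent_emb_tmul (p : ℤ) (e : F p) {q : ℕ} {ω : A} (hω : ω ∈ 𝔄.gr q) :
    bigradedComponent 𝔄 F p q (emb R A F p (e ⊗ₜ[R] ω)) = e ⊗ₜ[R] ⟨ω, hω⟩ := by
  rw [bigradedComponent, LinearMap.comp_apply, emb, DirectSum.component.lof_self, map_tmul,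
    projGr_of_mem 𝔄 hω, LinearMap.id_apply]

theorem bigradedComponent_emb_tmul_of_ne {p p' : ℤ} {q q' : ℕ} (h : (p', q') ≠ (p, q))
    (e : F p) {ω : A} (hω : ω ∈ 𝔄.gr q) :
    bigradedComponent 𝔄 F p' q' (emb R A F p (e ⊗ₜ[R] ω)) = 0 := by
  rw [bigradedComponent, LinearMap.comp_apply, emb]
  obtain rfl | hp := eq_or_ne p p'
  · have hq : q ≠ q' := fun hq ↦ h (hq ▸ rfl)
    rw [DirectSum.component.lof_self, map_tmul, projGr_of_mem_ne 𝔄 hq hω, tmul_zero]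
  · rw [DirectSum.component.of, dif_neg hp, map_zero]

/-- The graded Leibniz rule of a `ℤ`-connection on `M = ⊕ₚ F^p ⊗[R] A`, as a property of an
arbitrary self-map of `M`. -/
def SatisfiesLeibniz (𝔼 : IndMod R A F → IndMod R A F) : Prop :=
  ∀ (n : ℤ) (m : IndMod R A F) (a : A), m ∈ degSub k R A 𝔄 F n →
    𝔼 (rAct R A F a m) = rAct R A F a (𝔼 m)
      + (((-1 : ℤˣ) ^ n : ℤˣ) : ℤ) • rAct R A F (𝔄.D a) m

variable {𝔄} {𝔼 : IndMod R A F → IndMod R A F}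

theorem SatisfiesLeibniz.map_smul (h𝔼 : SatisfiesLeibniz 𝔄 𝔼) (r : R) {n : ℤ}
    {m : IndMod R A F} (hm : m ∈ degSub k R A 𝔄 F n) :
    𝔼 (r • m) = r • 𝔼 m
      + (((-1 : ℤˣ) ^ n : ℤˣ) : ℤ) • rAct R A F (𝔄.D (algebraMap R A r)) m := by
  simpa only [rAct_algebraMap] using h𝔼 n m (algebraMap R A r) hm

theorem SatisfiesLeibniz.map_emb_smul_tmul_one (h𝔼 : SatisfiesLeibniz 𝔄 𝔼) (p : ℤ) (r : R)
    (e : F p) :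
    𝔼 (emb R A F p ((r • e) ⊗ₜ[R] 1)) = r • 𝔼 (emb R A F p (e ⊗ₜ[R] 1))
      + (((-1 : ℤˣ) ^ p : ℤˣ) : ℤ) • emb R A F p (e ⊗ₜ[R] 𝔄.D (algebraMap R A r)) := by
  have hdeg : emb R A F p (e ⊗ₜ[R] 1) ∈ degSub k R A 𝔄 F p := by
    simpa only [Nat.cast_zero, add_zero] using emb_tmul_mem_degSub 𝔄 p e 𝔄.one_mem_gr_zero
  rw [← smul_tmul', LinearMap.map_smul, h𝔼.map_smul r hdeg, rAct_emb_tmul, one_mul]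

theorem stmt8_general (h𝔼 : SatisfiesLeibniz 𝔄 𝔼) :
    (∀ (p p' : ℤ) (q : ℕ), (p', q) ≠ (p, 1) → ∀ (r : R) (e : F p),
      bigradedComponent 𝔄 F p' q (𝔼 (emb R A F p ((r • e) ⊗ₜ[R] 1)))
        = r • bigradedComponent 𝔄 F p' q (𝔼 (emb R A F p (e ⊗ₜ[R] 1)))) ∧
    (∀ (p : ℤ) (r : R) (e : F p),
      bigradedComponent 𝔄 F p 1 (𝔼 (emb R A F p ((r • e) ⊗ₜ[R] 1)))
        = r • bigradedComponent 𝔄 F p 1 (𝔼 (emb R A F p (e ⊗ₜ[R] 1)))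
          + (((-1 : ℤˣ) ^ p : ℤˣ) : ℤ) •
            (e ⊗ₜ[R] ⟨𝔄.D (algebraMap R A r), 𝔄.D_algebraMap_mem_gr_one r⟩)) := by
  refine ⟨fun p p' q hpq r e ↦ ?_, fun p r e ↦ ?_⟩ <;>
    rw [h𝔼.map_emb_smul_tmul_one, map_add, LinearMap.map_smul, map_zsmul]
  · rw [bigradedComponent_emb_tmul_of_ne 𝔄 hpq e (𝔄.D_algebraMap_mem_gr_one r), smul_zero,
      add_zero]
  · rw [bigradedComponent_emb_tmul 𝔄 p e (𝔄.D_algebraMap_mem_gr_one r)]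

end

/-- for a `ℤ`-connection `𝔼` on the induced module `M = ⊕ₚ E^p ⊗[R] A`,
the components `𝔼^q` of `𝔼(e ⊗ 1)` are `R`-linear for `q ≠ 1`, while the component
`𝔼^1` satisfies the connection Leibniz rule with respect to `D`. -/
theorem stmt8 {k R A : Type*} [Field k] [CommRing R] [Algebra k R]
    [Ring A] [Algebra k A] [Algebra R A] [IsScalarTower k R A]
    (𝔄 : CurvedDGAOver k R A)
    (E : ℤ → Type*) [∀ p, AddCommGroup (E p)] [∀ p, Module R (E p)]
    [∀ p, Module k (E p)] [∀ p, IsScalarTower k R (E p)]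
    (𝔼 : IndMod R A E →ₗ[k] IndMod R A E)
    (h𝔼 : IsZConnection k R A 𝔄 E 𝔼) :
    -- (i) for `q ≠ 1`, the component `𝔼^q : E^p → E^{p'} ⊗[R] 𝒜 q` is `R`-linear:
    (∀ (p p' : ℤ) (q : ℕ), p' + (q : ℤ) = p + 1 → q ≠ 1 →
      ∀ (r : R) (e : E p),
        connComp 𝔄 E 𝔼 p p' q (r • e) = r • connComp 𝔄 E 𝔼 p p' q e) ∧
    -- (ii) the component `𝔼^1 : E^p → E^p ⊗[R] 𝒜 1` satisfies the Leibniz rule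
    -- `𝔼^1(r·e) = 𝔼^1(e)·r + (−1)^p e ⊗ D(r)`:
    (∀ (p : ℤ) (r : R) (e : E p),
      connComp 𝔄 E 𝔼 p p 1 (r • e)
        = r • connComp 𝔄 E 𝔼 p p 1 e
          + (((-1 : ℤˣ) ^ p : ℤˣ) : ℤ) •
            (e ⊗ₜ[R] (⟨𝔄.D (algebraMap R A r),
              𝔄.D_mem (𝔄.gr_zero ▸ LinearMap.mem_range_self (Algebra.linearMap R A) r)⟩ :
                ↥(𝔄.gr 1)))) := by
  obtain ⟨linear, leibniz⟩ := stmt8_general (𝔼 := 𝔼) h𝔼.2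
  exact ⟨fun p p' q _ hq ↦ linear p p' q fun h ↦ hq (Prod.ext_iff.mp h).2, leibniz⟩

end
end
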